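/- Let (H_•, P_•) be a Hilbert complex of length n and fix 0 ≤ k ≤ n. If the cohomology H^k := ker(P_k)/ran(P_{k−1}) is finite dimensional, then ran(P_{k−1}) is a closed subspace of H_k, and the quotient map ker(P_k) → H^k restricts to a linear isomorphism from the harmonic space Ĥ^k := ker(P_k) ∩ ker(P*_{k−1}) onto H^k. -/

import Mathlib

/-!
The graph of the closed operator `P_{k-1}` and the kernel of the closed operator `P_k` are Banach
spaces, and `ran(P_{k-1})` is the range of the bounded second projection from that graph to
`ker(P_k)`. A bounded operator between Banach spaces whose range has finite codimension has closed
range: divide out its kernel and apply the open mapping theorem to the sum with an algebraic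
complement of the range. Once `ran(P_{k-1})` is closed, it is complemented by its orthogonal
complement, which is `ker(P*_{k-1})`; by modularity the intersection with `ker(P_k)` is a
complement of `ran(P_{k-1})` in `ker(P_k)`, so it maps bijectively onto the quotient.
-/

open LinearMap Submodule

noncomputable section

variable {H : ℕ → Type}
  [∀ k, NormedAddCommGroup (H k)] [∀ k, InnerProductSpace ℂ (H k)]
  [∀ k, CompleteSpace (H k)]

/-- The kernel of a partially defined operator, as a submodule of the ambient space. -/
def pker {E F : Type} [NormedAddCommGroup E] [InnerProductSpace ℂ E]
    [NormedAddCommGroup F] [InnerProductSpace ℂ F] (T : E →ₗ.[ℂ] F) : Submodule ℂ E :=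
  (LinearMap.ker T.toFun).map T.domain.subtype

/-- The range of a partially defined operator. -/
def pran {E F : Type} [NormedAddCommGroup E] [InnerProductSpace ℂ E]
    [NormedAddCommGroup F] [InnerProductSpace ℂ F] (T : E →ₗ.[ℂ] F) : Submodule ℂ F :=
  LinearMap.range T.toFun

/-- `ran(P_{k−1})`, with the convention `P_{−1} = 0`. -/
def prevRange (P : ∀ k, H k →ₗ.[ℂ] H (k + 1)) : ∀ k, Submodule ℂ (H k)
  | 0 => ⊥
  | (k + 1) => pran (P k)

/-- `ker(P*_{k−1})`, with the convention `P_{−1} = 0` (so that it is everything in degree 0). -/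
def prevKerAdj (P : ∀ k, H k →ₗ.[ℂ] H (k + 1)) : ∀ k, Submodule ℂ (H k)
  | 0 => ⊤
  | (k + 1) => pker ((P k).adjoint)

/-- The harmonic space `Ĥ^k = ker(P_k) ∩ ker(P*_{k−1})`. -/
abbrev harmonicSp (P : ∀ k, H k →ₗ.[ℂ] H (k + 1)) (k : ℕ) : Submodule ℂ (H k) :=
  pker (P k) ⊓ prevKerAdj P k

section Algebra

variable {R M N : Type*} [Ring R] [AddCommGroup M] [Module R M] [AddCommGroup N] [Module R N]

lemma bijective_mkQ_comp_of_isCompl_range {p : Submodule R M} {f : N →ₗ[R] M}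
    (hf : Function.Injective f) (h : IsCompl p f.range) : Function.Bijective (p.mkQ ∘ₗ f) :=
  ((LinearEquiv.ofInjective f hf).trans (p.quotientEquivOfIsCompl f.range h).symm).bijective

lemma bijective_mkQ_comp_inclusion_inf_of_isCompl {p q r : Submodule R M} (hqr : IsCompl q r)
    (hqp : q ≤ p) :
    Function.Bijective ((q.comap p.subtype).mkQ ∘ₗ inclusion (inf_le_left : p ⊓ r ≤ p)) := by
  apply bijective_mkQ_comp_of_isCompl_range (inclusion_injective _)
  rw [range_inclusion, comap_inf, comap_subtype_self, top_inf_eq]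
  exact isCompl_comap_subtype_of_isCompl_of_le hqr hqp

end Algebra

section ClosedRange

variable {𝕜 E F : Type*} [NontriviallyNormedField 𝕜]
  [NormedAddCommGroup E] [NormedSpace 𝕜 E] [CompleteSpace E]
  [NormedAddCommGroup F] [NormedSpace 𝕜 F] [CompleteSpace F]

lemma isClosed_range_of_isCompl_isClosed (f : E →L[𝕜] F) {G : Submodule 𝕜 F}
    (h : IsCompl f.range G) (hG : IsClosed (G : Set F)) : IsClosed (f.range : Set F) := by
  have : IsClosed (f.ker : Set E) := f.isClosed_ker
  let g : (E ⧸ f.ker) →L[𝕜] F := f.ker.liftQL f le_rfl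
  have hker : g.ker = ⊥ := ker_liftQ_eq_bot _ _ _ le_rfl
  have hrange : g.range = f.range := range_liftQ _ _ _
  rw [← hrange] at h ⊢
  exact g.closed_complemented_range_of_isCompl_of_ker_eq_bot G h hG hker

variable [CompleteSpace 𝕜]

lemma isClosed_range_of_cofg (f : E →L[𝕜] F) [f.range.CoFG] : IsClosed (f.range : Set F) := by
  obtain ⟨G, hG⟩ := f.range.exists_isCompl
  have : FiniteDimensional 𝕜 G := .of_fg (CoFG.fg_of_isCompl hG inferInstance)
  exact isClosed_range_of_isCompl_isClosed f hG G.closed_of_finiteDimensional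

lemma isClosed_range_of_le_of_cofg_comap (f : E →L[𝕜] F) {K : Submodule 𝕜 F}
    (hK : IsClosed (K : Set F)) (hf : f.range ≤ K) [(f.range.comap K.subtype).CoFG] :
    IsClosed (f.range : Set F) := by
  have : CompleteSpace K := hK.completeSpace_coe
  let g : E →L[𝕜] K := f.codRestrict K fun x => hf ⟨x, rfl⟩
  have hg : g.range = f.range.comap K.subtype := range_codRestrict K f.toLinearMap _
  have : g.range.CoFG := by rwa [hg]
  have himage := hK.isClosedMap_subtype_val _ (isClosed_range_of_cofg g)
  have hmap : (f.range.comap K.subtype).map K.subtype = f.range := by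
    rw [map_comap_subtype, inf_eq_right.mpr hf]
  rwa [hg, ← coe_subtype, ← map_coe, hmap] at himage

lemma isClosed_range_toFun_of_le_of_cofg_comap {S : E →ₗ.[𝕜] F} (hS : S.IsClosed)
    {K : Submodule 𝕜 F} (hK : IsClosed (K : Set F)) (hSK : S.toFun.range ≤ K)
    [(S.toFun.range.comap K.subtype).CoFG] :
    IsClosed (S.toFun.range : Set F) := by
  have : CompleteSpace S.graph := IsClosed.completeSpace_coe (hs := hS)
  let f : S.graph →L[𝕜] F := ContinuousLinearMap.snd 𝕜 E F ∘L S.graph.subtypeL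
  have hf : f.range = S.toFun.range := by
    rw [← S.graph_map_snd_eq_range, ← range_domRestrict]
    rfl
  rw [← hf] at hSK ⊢
  have : (f.range.comap K.subtype).CoFG := by rwa [hf]
  exact isClosed_range_of_le_of_cofg_comap f hK hSK

end ClosedRange

section Operators

variable {E F : Type} [NormedAddCommGroup E] [InnerProductSpace ℂ E]
  [NormedAddCommGroup F] [InnerProductSpace ℂ F]

lemma pker_eq_comap_inl_graph (T : E →ₗ.[ℂ] F) : pker T = T.graph.comap (.inl ℂ E F) := by
  ext x
  simp [pker]

lemma isClosed_pker {T : E →ₗ.[ℂ] F} (hT : T.IsClosed) : IsClosed (pker T : Set E) := by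
  rw [pker_eq_comap_inl_graph]
  exact IsClosed.preimage (ContinuousLinearMap.inl ℂ E F).continuous hT

lemma pker_adjoint [CompleteSpace E] {T : E →ₗ.[ℂ] F} (hT : Dense (T.domain : Set E)) :
    pker T.adjoint = (pran T)ᗮ := by
  ext y
  rw [pker_eq_comap_inl_graph, LinearPMap.adjoint_graph_eq_graph_adjoint hT]
  simp [pran, mem_orthogonal, forall_comm (α := F)]

end Operators

section Complex

variable {P : ∀ k, H k →ₗ.[ℂ] H (k + 1)}

omit [∀ k, CompleteSpace (H k)] in
lemma prevRange_le_pker (hsub : ∀ k, ∀ x : (P k).domain, P k x ∈ (P (k + 1)).domain)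
    (hcomp : ∀ k, ∀ x : (P k).domain, P (k + 1) ⟨P k x, hsub k x⟩ = 0) :
    ∀ k, prevRange P k ≤ pker (P k)
  | 0 => bot_le
  | k + 1 => by
    rintro _ ⟨x, rfl⟩
    exact ⟨⟨P k x, hsub k x⟩, hcomp k x, rfl⟩

lemma prevKerAdj_eq_orthogonal_prevRange (hdense : ∀ k, Dense ((P k).domain : Set (H k))) :
    ∀ k, prevKerAdj P k = (prevRange P k)ᗮ
  | 0 => bot_orthogonal_eq_top.symm
  | k + 1 => pker_adjoint (hdense k)

lemma isClosed_prevRange (hclosed : ∀ k, (P k).IsClosed) {k : ℕ}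
    (hle : prevRange P k ≤ pker (P k))
    [hfd : ((prevRange P k).comap (pker (P k)).subtype).CoFG] :
    IsClosed (prevRange P k : Set (H k)) := by
  cases k with
  | zero => exact isClosed_singleton
  | succ k =>
    have : ((P k).toFun.range.comap (pker (P (k + 1))).subtype).CoFG := hfd
    exact isClosed_range_toFun_of_le_of_cofg_comap (hclosed k) (isClosed_pker (hclosed (k + 1))) hle

end Complex

theorem finite_dimensional_cohomology_closed_range_and_hodge_general
    (P : ∀ k, H k →ₗ.[ℂ] H (k + 1))
    (hdense : ∀ k, Dense ((P k).domain : Set (H k)))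
    (hclosed : ∀ k, (P k).IsClosed)
    (hsub : ∀ k, ∀ x : (P k).domain, ((P k) x) ∈ (P (k + 1)).domain)
    (hcomp : ∀ k, ∀ x : (P k).domain, P (k + 1) ⟨P k x, hsub k x⟩ = 0)
    (k : ℕ)
    (hfd : FiniteDimensional ℂ
      (↥(pker (P k)) ⧸ (prevRange P k).comap (pker (P k)).subtype)) :
    IsClosed ((prevRange P k : Set (H k))) ∧
    Function.Bijective
      ((Submodule.mkQ ((prevRange P k).comap (pker (P k)).subtype)).comp
        (Submodule.inclusion (inf_le_left : harmonicSp P k ≤ pker (P k)))) := by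
  have hle : prevRange P k ≤ pker (P k) := prevRange_le_pker hsub hcomp k
  have hR : IsClosed (prevRange P k : Set (H k)) := isClosed_prevRange hclosed hle
  have : CompleteSpace (prevRange P k) := hR.completeSpace_coe
  have hcompl : IsCompl (prevRange P k) (prevKerAdj P k) := by
    rw [prevKerAdj_eq_orthogonal_prevRange hdense]
    exact (prevRange P k).isCompl_orthogonal
  exact ⟨hR, bijective_mkQ_comp_inclusion_inf_of_isCompl hcompl hle⟩

/-- if the cohomology `H^k = ker(P_k)/ran(P_{k−1})` of a Hilbert complex is finite
dimensional, then `ran(P_{k−1})` is closed and the quotient map `ker(P_k) → H^k` restricts to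
a linear isomorphism from the harmonic space `Ĥ^k = ker(P_k) ∩ ker(P*_{k−1})` onto `H^k`. -/
theorem finite_dimensional_cohomology_closed_range_and_hodge
    (n : ℕ) (P : ∀ k, H k →ₗ.[ℂ] H (k + 1))
    (hdense : ∀ k, Dense ((P k).domain : Set (H k)))
    (hclosed : ∀ k, (P k).IsClosed)
    (hsub : ∀ k, ∀ x : (P k).domain, ((P k) x) ∈ (P (k + 1)).domain)
    (hcomp : ∀ k, ∀ x : (P k).domain, P (k + 1) ⟨P k x, hsub k x⟩ = 0)
    (htop : ∀ k, n ≤ k → P k = 0)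
    (k : ℕ) (hk : k ≤ n)
    (hfd : FiniteDimensional ℂ
      (↥(pker (P k)) ⧸ (prevRange P k).comap (pker (P k)).subtype)) :
    IsClosed ((prevRange P k : Set (H k))) ∧
    Function.Bijective
      ((Submodule.mkQ ((prevRange P k).comap (pker (P k)).subtype)).comp
        (Submodule.inclusion (inf_le_left : harmonicSp P k ≤ pker (P k)))) :=
  finite_dimensional_cohomology_closed_range_and_hodge_general P hdense hclosed hsub hcomp k hfd
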